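/- For all complex numbers q and x with |q| < 1 and 0 < |x| < 1: Σ_{n=1}^∞ Σ_{c=0}^n (x;q)_n x^{n−1} q^{c²} x^{2c} [n choose c]_q = (qx;q)_∞ · Σ_{c=0}^∞ q^{c²} x^{3c−1} / (qx;q)_c − (1−x)·x^{−1}·(qx;q)_∞ + (1−x) · Σ_{n=1}^∞ Σ_{c=0}^n ((qx;q)_{n−1} − (qx;q)_∞) · x^{n−1} · q^{c²} · x^{2c} · [n choose c]_q, all series converging absolutely. -/

import Mathlib

/-- The finite q-Pochhammer symbol `(x;q)_n = ∏_{i=1}^n (1 - x q^{i-1})`. -/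
noncomputable def qPoch (q x : ℂ) (n : ℕ) : ℂ := ∏ i ∈ Finset.range n, (1 - x * q ^ i)

/-- The infinite q-Pochhammer symbol `(x;q)_∞ = ∏_{i=1}^∞ (1 - x q^{i-1})`. -/
noncomputable def qPochInf (q x : ℂ) : ℂ := ∏' i : ℕ, (1 - x * q ^ i)

/-- The Gaussian binomial coefficient `[n choose c]_q`. -/
noncomputable def qBinom (q : ℂ) (n c : ℕ) : ℂ :=
  if c ≤ n then qPoch q q n / (qPoch q q c * qPoch q q (n - c)) else 0


lemma qPoch_succ (q x : ℂ) (n : ℕ) : qPoch q x (n + 1) = qPoch q x n * (1 - x * q ^ n) := by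
  simp [qPoch, Finset.prod_range_succ]

lemma qPoch_succ' (q x : ℂ) (n : ℕ) : qPoch q x (n + 1) = (1 - x) * qPoch q (q * x) n := by
  simp only [qPoch, Finset.prod_range_succ', pow_zero, mul_one]
  rw [mul_comm]
  congr 1
  refine Finset.prod_congr rfl fun i _ => ?_
  ring

lemma factor_ne {q x : ℂ} (hq : ‖q‖ < 1) (hx : ‖x‖ < 1) (n : ℕ) : 1 - x * q ^ n ≠ 0 := by
  intro h
  have h1 : x * q ^ n = 1 := (sub_eq_zero.mp h).symm
  have h2 : ‖x * q ^ n‖ < 1 := by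
    rw [norm_mul, norm_pow]
    calc ‖x‖ * ‖q‖ ^ n ≤ ‖x‖ * 1 := by
          gcongr
          exact pow_le_one₀ (norm_nonneg _) hq.le
      _ < 1 := by simpa using hx
  rw [h1] at h2
  simp at h2

lemma qPoch_ne {q x : ℂ} (hq : ‖q‖ < 1) (hx : ‖x‖ < 1) (n : ℕ) : qPoch q x n ≠ 0 :=
  Finset.prod_ne_zero_iff.mpr fun i _ => factor_ne hq hx i

lemma summ_aux {q : ℂ} (x : ℂ) (hq : ‖q‖ < 1) : Summable fun i : ℕ => ‖-(x * q ^ i)‖ := by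
  simp only [norm_neg, norm_mul, norm_pow]
  exact (summable_geometric_of_lt_one (norm_nonneg _) hq).mul_left _

lemma qPoch_tendsto {q : ℂ} (x : ℂ) (hq : ‖q‖ < 1) :
    Filter.Tendsto (qPoch q x) Filter.atTop (nhds (qPochInf q x)) := by
  have h := (multipliable_one_add_of_summable (summ_aux x hq)).hasProd.tendsto_prod_nat
  simp only [← sub_eq_add_neg] at h
  exact h

lemma qPochInf_ne {q x : ℂ} (hq : ‖q‖ < 1) (hx : ‖x‖ < 1) : qPochInf q x ≠ 0 := by
  have h := tprod_one_add_ne_zero_of_summable (f := fun i : ℕ => -(x * q ^ i))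
    (fun i => by simpa only [← sub_eq_add_neg] using factor_ne hq hx i) (summ_aux x hq)
  simp only [← sub_eq_add_neg] at h
  exact h

lemma qPoch_bdd {q : ℂ} (x : ℂ) (hq : ‖q‖ < 1) : ∃ M, ∀ n, ‖qPoch q x n‖ ≤ M := by
  obtain ⟨M, hM⟩ := (Metric.isBounded_range_of_tendsto _ (qPoch_tendsto x hq)).exists_norm_le
  exact ⟨M, fun n => hM _ ⟨n, rfl⟩⟩

lemma qPoch_inv_bdd {q x : ℂ} (hq : ‖q‖ < 1) (hx : ‖x‖ < 1) :
    ∃ M, ∀ n, ‖(qPoch q x n)⁻¹‖ ≤ M := by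
  obtain ⟨M, hM⟩ := (Metric.isBounded_range_of_tendsto _
    ((qPoch_tendsto x hq).inv₀ (qPochInf_ne hq hx))).exists_norm_le
  exact ⟨M, fun n => hM _ ⟨n, rfl⟩⟩

lemma qBinom_bdd {q : ℂ} (hq : ‖q‖ < 1) : ∃ M, 0 ≤ M ∧ ∀ n c, ‖qBinom q n c‖ ≤ M := by
  obtain ⟨A, hA⟩ := qPoch_bdd q hq
  obtain ⟨B, hB⟩ := qPoch_inv_bdd hq hq
  have hA0 := (norm_nonneg _).trans (hA 0)
  have hB0 := (norm_nonneg _).trans (hB 0)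
  refine ⟨A * (B * B), by positivity, fun n c => ?_⟩
  unfold qBinom
  split_ifs
  · rw [div_eq_mul_inv, mul_inv, norm_mul, norm_mul]
    gcongr
    · exact hA _
    · exact hB _
    · exact hB _
  · simp; positivity

lemma qBinom_zero {q : ℂ} (hq : ‖q‖ < 1) (n : ℕ) : qBinom q n 0 = 1 := by
  have := qPoch_ne hq hq n
  have h0 : qPoch q q 0 = 1 := by simp [qPoch]
  simp [qBinom, h0, this]

lemma qBinom_gt (q : ℂ) {n c : ℕ} (h : n < c) : qBinom q n c = 0 := by
  simp [qBinom, h]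

lemma qBinom_pascal {q : ℂ} (hq : ‖q‖ < 1) (n c : ℕ) :
    qBinom q (n + 1) (c + 1) = qBinom q n c + q ^ (c + 1) * qBinom q n (c + 1) := by
  have h0 : qPoch q q 0 = 1 := by simp [qPoch]
  rcases lt_trichotomy n c with h | h | h
  · rw [qBinom_gt q h, qBinom_gt q (by omega), qBinom_gt q (by omega)]; simp
  · subst h
    rw [qBinom_gt q (Nat.lt_succ_self n)]
    simp [qBinom, h0, qPoch_ne hq hq]
  · obtain ⟨k, rfl⟩ := Nat.exists_eq_add_of_lt h
    have e1 : c + k + 1 + 1 - (c + 1) = k + 1 := by omega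
    have e2 : c + k + 1 - c = k + 1 := by omega
    have e3 : c + k + 1 - (c + 1) = k := by omega
    simp only [qBinom, e1, e2, e3]
    rw [if_pos (by omega), if_pos (by omega), if_pos (by omega)]
    have a1 := qPoch_ne hq hq c
    have a2 := qPoch_ne hq hq k
    have b1 := factor_ne hq hq c
    have b2 := factor_ne hq hq k
    rw [qPoch_succ q q (c + k + 1), qPoch_succ q q c, qPoch_succ q q k]
    field_simp
    ring

lemma gen_summable {q x : ℂ} (hq : ‖q‖ < 1) (hx : ‖x‖ < 1) (c : ℕ) :
    Summable fun n : ℕ => x ^ n * qBinom q n c := by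
  obtain ⟨M, hM0, hM⟩ := qBinom_bdd hq
  refine Summable.of_norm_bounded
    ((summable_geometric_of_lt_one (norm_nonneg x) hx).mul_right M) fun n => ?_
  rw [norm_mul, norm_pow]
  gcongr
  exact hM _ _

lemma gen_tsum {q x : ℂ} (hq : ‖q‖ < 1) (hx : ‖x‖ < 1) (c : ℕ) :
    ∑' n : ℕ, x ^ n * qBinom q n c = x ^ c / qPoch q x (c + 1) := by
  induction c with
  | zero => simp [qBinom_zero hq, tsum_geometric_of_norm_lt_one hx, qPoch]
  | succ c ih =>
    have key := (gen_summable hq hx (c + 1)).tsum_eq_zero_add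
    have e : ∀ n : ℕ, x ^ (n + 1) * qBinom q (n + 1) (c + 1)
        = x * (x ^ n * qBinom q n c) + x * q ^ (c + 1) * (x ^ n * qBinom q n (c + 1)) := by
      intro n; rw [qBinom_pascal hq]; ring
    simp only [e] at key
    rw [((gen_summable hq hx c).mul_left _).tsum_add ((gen_summable hq hx (c + 1)).mul_left _),
      tsum_mul_left, tsum_mul_left, ih, qBinom_gt q (Nat.succ_pos c), mul_zero, zero_add] at key
    have b := factor_ne hq hx (c + 1)
    have a := qPoch_ne hq hx (c + 1)
    rw [qPoch_succ q x (c + 1), eq_div_iff (mul_ne_zero a b)]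
    generalize (∑' n : ℕ, x ^ n * qBinom q n (c + 1)) = F at key ⊢
    have k2 : F * (1 - x * q ^ (c + 1)) = x * (x ^ c / qPoch q x (c + 1)) := by
      linear_combination key
    rw [mul_comm (qPoch q x (c + 1)), ← mul_assoc, k2]
    field_simp
    ring

lemma dbl_summable {q x : ℂ} (hq : ‖q‖ < 1) (hx : ‖x‖ < 1) :
    Summable fun p : ℕ × ℕ => x ^ p.1 * q ^ (p.2 ^ 2) * x ^ (2 * p.2) * qBinom q p.1 p.2 := by
  obtain ⟨M, hM0, hM⟩ := qBinom_bdd hq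
  have g := summable_geometric_of_lt_one (norm_nonneg x) hx
  refine Summable.of_norm_bounded ((g.mul_of_nonneg g (fun _ => by positivity)
    (fun _ => by positivity)).mul_right M) fun p => ?_
  simp only [norm_mul, norm_pow]
  have h1 : ‖q‖ ^ (p.2 ^ 2) ≤ 1 := pow_le_one₀ (norm_nonneg _) hq.le
  have h2 : ‖x‖ ^ (2 * p.2) ≤ ‖x‖ ^ p.2 :=
    pow_le_pow_of_le_one (norm_nonneg _) hx.le (by omega)
  have h3 := hM p.1 p.2
  calc _ ≤ ‖x‖ ^ p.1 * 1 * ‖x‖ ^ p.2 * M := by gcongr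
    _ = _ := by ring

lemma row_tsum (q x : ℂ) (n : ℕ) :
    ∑' c : ℕ, x ^ n * q ^ (c ^ 2) * x ^ (2 * c) * qBinom q n c
      = ∑ c ∈ Finset.range (n + 1), x ^ n * q ^ (c ^ 2) * x ^ (2 * c) * qBinom q n c := by
  refine tsum_eq_sum fun c hc => ?_
  rw [qBinom_gt q (by simpa using hc), mul_zero]

lemma summable_bdd_mul {P u : ℕ → ℂ} {M : ℝ} (hP : ∀ n, ‖P n‖ ≤ M) (hu : Summable u) :
    Summable fun n => P n * u n := by
  refine Summable.of_norm_bounded (hu.norm.mul_left M) fun n => ?_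
  rw [norm_mul]
  gcongr
  exact hP n

theorem stmt_4 (q x : ℂ) (hq : ‖q‖ < 1) (hx0 : 0 < ‖x‖) (hx : ‖x‖ < 1) :
    Summable (fun n : ℕ => ∑ c ∈ Finset.range (n + 2),
      qPoch q x (n + 1) * x ^ n * q ^ (c ^ 2) * x ^ (2 * c) * qBinom q (n + 1) c) ∧
    Summable (fun c : ℕ => q ^ (c ^ 2) * x ^ (3 * (c : ℤ) - 1) / qPoch q (q * x) c) ∧
    Summable (fun n : ℕ => ∑ c ∈ Finset.range (n + 2),
      (qPoch q (q * x) n - qPochInf q (q * x)) * x ^ n * q ^ (c ^ 2) * x ^ (2 * c) *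
        qBinom q (n + 1) c) ∧
    ∑' n : ℕ, ∑ c ∈ Finset.range (n + 2),
        qPoch q x (n + 1) * x ^ n * q ^ (c ^ 2) * x ^ (2 * c) * qBinom q (n + 1) c
      = qPochInf q (q * x) * ∑' c : ℕ, q ^ (c ^ 2) * x ^ (3 * (c : ℤ) - 1) / qPoch q (q * x) c
        - (1 - x) * x⁻¹ * qPochInf q (q * x)
        + (1 - x) * ∑' n : ℕ, ∑ c ∈ Finset.range (n + 2),
            (qPoch q (q * x) n - qPochInf q (q * x)) * x ^ n * q ^ (c ^ 2) * x ^ (2 * c) *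
              qBinom q (n + 1) c := by
  have hxne : x ≠ 0 := norm_pos_iff.mp hx0
  have hqx : ‖q * x‖ < 1 := by
    rw [norm_mul]
    exact mul_lt_one_of_nonneg_of_lt_one_left (norm_nonneg _) hq hx.le
  have hx1 : 1 - x ≠ 0 := by simpa using factor_ne hq hx 0
  obtain ⟨A, hA⟩ := qPoch_bdd (q * x) hq
  obtain ⟨B, hB⟩ := qPoch_inv_bdd hq hqx
  set t : ℕ → ℂ := fun n =>
    ∑ c ∈ Finset.range (n + 1), x ^ n * q ^ (c ^ 2) * x ^ (2 * c) * qBinom q n c with ht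
  set u : ℕ → ℂ := fun n =>
    ∑ c ∈ Finset.range (n + 2), x ^ n * q ^ (c ^ 2) * x ^ (2 * c) * qBinom q (n + 1) c with hu
  have hD := dbl_summable hq hx
  have hts : Summable t := by
    have := hD.prod
    simpa only [row_tsum] using this
  have htu : ∀ n, t (n + 1) = x * u n := by
    intro n
    simp only [ht, hu, Finset.mul_sum]
    refine Finset.sum_congr rfl fun c _ => ?_
    ring
  have hus : Summable u := by
    have h1 : Summable fun n => t (n + 1) := (summable_nat_add_iff 1).mpr hts
    simp only [htu] at h1
    exact (summable_mul_left_iff hxne).mp h1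
  have e1 : ∀ n : ℕ, ∑ c ∈ Finset.range (n + 2),
      qPoch q x (n + 1) * x ^ n * q ^ (c ^ 2) * x ^ (2 * c) * qBinom q (n + 1) c
      = (1 - x) * (qPoch q (q * x) n * u n) := by
    intro n
    simp only [hu, Finset.mul_sum, qPoch_succ' q x n]
    refine Finset.sum_congr rfl fun c _ => ?_
    ring
  have e2 : ∀ n : ℕ, ∑ c ∈ Finset.range (n + 2),
      (qPoch q (q * x) n - qPochInf q (q * x)) * x ^ n * q ^ (c ^ 2) * x ^ (2 * c) *
        qBinom q (n + 1) c
      = qPoch q (q * x) n * u n - qPochInf q (q * x) * u n := by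
    intro n
    simp only [hu, Finset.mul_sum, ← Finset.sum_sub_distrib]
    refine Finset.sum_congr rfl fun c _ => ?_
    ring
  have e3 : ∀ c : ℕ, q ^ (c ^ 2) * x ^ (3 * (c : ℤ) - 1) / qPoch q (q * x) c
      = x⁻¹ * ((1 - x) * ∑' n : ℕ, x ^ n * q ^ (c ^ 2) * x ^ (2 * c) * qBinom q n c) := by
    intro c
    have h1 : ∑' n : ℕ, x ^ n * q ^ (c ^ 2) * x ^ (2 * c) * qBinom q n c
        = q ^ (c ^ 2) * x ^ (2 * c) * (x ^ c / qPoch q x (c + 1)) := by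
      rw [← gen_tsum hq hx, ← tsum_mul_left]
      refine tsum_congr fun n => ?_
      ring
    have h2 : x ^ (3 * (c : ℤ) - 1) = x ^ (2 * c) * x ^ c * x⁻¹ := by
      rw [zpow_sub₀ hxne, zpow_one, div_eq_mul_inv, ← pow_add]
      congr 1
      rw [← zpow_natCast]
      congr 1
      push_cast
      ring
    rw [h1, h2, qPoch_succ']
    have := qPoch_ne hq hqx c
    field_simp
  have hcol := hD.prod_symm.prod
  simp only [Prod.fst_swap, Prod.snd_swap] at hcol
  have hPu := summable_bdd_mul hA hus
  have hIu := hus.mul_left (qPochInf q (q * x))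
  simp only [e1, e2, e3]
  refine ⟨hPu.mul_left _, (hcol.mul_left _).mul_left _, hPu.sub hIu, ?_⟩
  have hswap : ∑' c : ℕ, ∑' n : ℕ, x ^ n * q ^ (c ^ 2) * x ^ (2 * c) * qBinom q n c
      = ∑' n, t n := by
    have h := Summable.tsum_comm (f := fun n c : ℕ =>
      x ^ n * q ^ (c ^ 2) * x ^ (2 * c) * qBinom q n c) hD
    rw [h]
    exact tsum_congr fun n => row_tsum q x n
  have ht0 : t 0 = 1 := by simp [ht, qBinom_zero hq]
  rw [hPu.tsum_sub hIu]
  simp only [tsum_mul_left]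
  rw [hswap, hts.tsum_eq_zero_add, ht0]
  simp only [htu, tsum_mul_left]
  field_simp
  ring
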